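/- Assume the characteristic of F is not 2, and assume that at least one of the following three sets equals K × {0}: the left nucleus {z : (z·a)·b = z·(a·b) for all a, b}, the middle nucleus {z : (a·z)·b = a·(z·b) for all a, b}, or the right nucleus {z : (a·b)·z = a·(b·z) for all a, b} of A = Cay(K,c,σ₁,σ₂,σ₃,σ₄). Then an F-linear bijection G : K × K → K × K is an F-algebra automorphism of A (i.e., G((u,v)·(x,y)) = G(u,v)·G(x,y) for all u,v,x,y ∈ K) if and only if there exist F-algebra automorphisms g, h of K and b ∈ K with b ≠ 0 such that G(u,v) = (g(u), h(v)·b) for all u, v ∈ K, g ∘ σᵢ = σᵢ ∘ h for i = 1,2, h ∘ σᵢ = σᵢ ∘ g for i = 3,4, and g(c) = c·σ₁(b)·σ₂(b). -/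

import Mathlib

/-!
An automorphism `G` preserves each of the three nuclei, so it restricts to an automorphism `g` of
`K × {0}`. Write `G (0, 1) = (a, b)`. Multiplying `(w, 0)` with `(0, 1)` on either side determines
`G (0, σ₃ w)` and `G (0, σ₄ w)` in terms of `g`, `a`, `b`; when `a = 0` the required form of `G` can
be read off. If `a ≠ 0`, comparing the two gives `σ₃ = σ₄`, and the products `(0, σ₃ w) · (0, 1)`
exhibit the multiplicative map `g ∘ σ₁ ∘ σ₃` as a weighted mean of the multiplicative maps `g` and
`σ₁ ∘ σ₃ ∘ g`. Such a mean has zero variance, so it equals `g` and `σ₁ = σ₃⁻¹`; likewise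
`σ₂ = σ₃⁻¹`. But then `A` is associative and its nuclei are all of `K × K`.
-/

/-- Multiplication of the generalized Cayley–Dickson double
`Cay(K, c, σ₁, σ₂, σ₃, σ₄)`:
`(u,v)·(x,y) = (u·x + c·σ₁(v)·σ₂(y), σ₃(u)·y + v·σ₄(x))`. -/
def cayMul {R : Type*} [Ring R] (c : R) (σ₁ σ₂ σ₃ σ₄ : R → R) :
    R × R → R × R → R × R :=
  fun p q => (p.1 * q.1 + c * σ₁ p.2 * σ₂ q.2, σ₃ p.1 * q.2 + p.2 * σ₄ q.1)

open Function

section Nucleus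

variable {A B : Type*} {m : A → A → A} {m' : B → B → B}

/-- The left nucleus of a magma; the operation is an explicit argument so that it applies to
`cayMul`, which is not registered as a `Mul` instance. -/
def leftNucleus (m : A → A → A) : Set A :=
  {z | ∀ a b, m (m z a) b = m z (m a b)}

/-- The middle nucleus of a magma, in the same encoding as `leftNucleus`. -/
def middleNucleus (m : A → A → A) : Set A :=
  {z | ∀ a b, m (m a z) b = m a (m z b)}

/-- The right nucleus of a magma, in the same encoding as `leftNucleus`. -/
def rightNucleus (m : A → A → A) : Set A :=
  {z | ∀ a b, m (m a b) z = m a (m b z)}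

/-- `S` is at least one of the left, middle and right nuclei of a magma: the form in which the
nuclei of `Cay(K,c,σ₁,σ₂,σ₃,σ₄)` are compared with `K × {0}`. -/
def IsOneSidedNucleus (m : A → A → A) (S : Set A) : Prop :=
  leftNucleus m = S ∨ middleNucleus m = S ∨ rightNucleus m = S

theorem apply_mem_leftNucleus_iff {f : A → B} (hf : Bijective f) (h : Semiconj₂ f m m') {z : A} :
    f z ∈ leftNucleus m' ↔ z ∈ leftNucleus m := by
  simp only [leftNucleus, Set.mem_ofPred_eq, hf.surjective.forall, ← h.eq, hf.injective.eq_iff]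

theorem apply_mem_middleNucleus_iff {f : A → B} (hf : Bijective f) (h : Semiconj₂ f m m') {z : A} :
    f z ∈ middleNucleus m' ↔ z ∈ middleNucleus m := by
  simp only [middleNucleus, Set.mem_ofPred_eq, hf.surjective.forall, ← h.eq, hf.injective.eq_iff]

theorem apply_mem_rightNucleus_iff {f : A → B} (hf : Bijective f) (h : Semiconj₂ f m m') {z : A} :
    f z ∈ rightNucleus m' ↔ z ∈ rightNucleus m := by
  simp only [rightNucleus, Set.mem_ofPred_eq, hf.surjective.forall, ← h.eq, hf.injective.eq_iff]

theorem IsOneSidedNucleus.apply_mem_iff {S : Set A} (hS : IsOneSidedNucleus m S) {f : A → A}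
    (hf : Bijective f) (h : Semiconj₂ f m m) {z : A} : f z ∈ S ↔ z ∈ S := by
  rcases hS with rfl | rfl | rfl
  · exact apply_mem_leftNucleus_iff hf h
  · exact apply_mem_middleNucleus_iff hf h
  · exact apply_mem_rightNucleus_iff hf h

theorem IsOneSidedNucleus.eq_univ {S : Set A} (hS : IsOneSidedNucleus m S)
    (hm : ∀ x y z, m (m x y) z = m x (m y z)) : S = Set.univ := by
  rcases hS with rfl | rfl | rfl
  · exact Set.eq_univ_of_forall fun z a b ↦ hm z a b
  · exact Set.eq_univ_of_forall fun z a b ↦ hm a z b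
  · exact Set.eq_univ_of_forall fun z a b ↦ hm a b z

end Nucleus

theorem eq_of_weighted_mean_sq_eq {R : Type*} [CommRing R] [NoZeroDivisors R] {α β r s t : R}
    (hα : α ≠ 0) (hβ : β ≠ 0) (hαβ : α + β ≠ 0) (hmean : (α + β) * r = α * s + β * t)
    (hmean_sq : (α + β) * r ^ 2 = α * s ^ 2 + β * t ^ 2) : r = s := by
  have variance_eq_zero : α * β * (s - t) ^ 2 = 0 := by
    linear_combination ((α + β) * r + α * s + β * t) * hmean - (α + β) * hmean_sq
  have hst : s = t := by simpa [hα, hβ, sub_eq_zero] using variance_eq_zero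
  exact mul_left_cancel₀ hαβ (by rw [hmean, hst, add_mul])

section Cay

variable {F K : Type*} [CommSemiring F] [CommRing K] [Algebra F K]
  {σ₁ σ₂ σ₃ σ₄ g h : K ≃ₐ[F] K} {b c : K} {G : K × K → K × K}

theorem cayMul_symm_assoc (σ : K ≃ₐ[F] K) (c : K) (p q r : K × K) :
    cayMul c σ.symm σ.symm σ σ (cayMul c σ.symm σ.symm σ σ p q) r =
      cayMul c σ.symm σ.symm σ σ p (cayMul c σ.symm σ.symm σ σ q r) := by
  ext <;> simp only [cayMul, map_add, map_mul, σ.apply_symm_apply, σ.symm_apply_apply] <;> ring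

theorem semiconj₂_cayMul_of_intertwining (hGgh : ∀ u v, G (u, v) = (g u, h v * b))
    (h₁ : ∀ x, g (σ₁ x) = σ₁ (h x)) (h₂ : ∀ x, g (σ₂ x) = σ₂ (h x))
    (h₃ : ∀ x, h (σ₃ x) = σ₃ (g x)) (h₄ : ∀ x, h (σ₄ x) = σ₄ (g x))
    (hgc : g c = c * σ₁ b * σ₂ b) :
    Semiconj₂ G (cayMul c σ₁ σ₂ σ₃ σ₄) (cayMul c σ₁ σ₂ σ₃ σ₄) := by
  rintro ⟨u, v⟩ ⟨x, y⟩
  ext <;> simp only [cayMul, hGgh, map_add, map_mul, h₁, h₂, h₃, h₄, hgc] <;> ring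

theorem exists_algEquiv_apply_mk_zero {G : (K × K) ≃ₗ[F] K × K}
    (hG : Semiconj₂ G (cayMul c σ₁ σ₂ σ₃ σ₄) (cayMul c σ₁ σ₂ σ₃ σ₄))
    (hsnd : ∀ p, (G p).2 = 0 ↔ p.2 = 0) :
    ∃ g : K ≃ₐ[F] K, ∀ u, G (u, 0) = (g u, 0) := by
  let gLin : K →ₗ[F] K := .fst F K K ∘ₗ G.toLinearMap ∘ₗ .inl F K K
  have hg (u : K) : G (u, 0) = (gLin u, 0) := Prod.ext rfl ((hsnd (u, 0)).2 rfl)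
  have hinj : Injective gLin := fun x y hxy ↦ by
    simpa using G.injective ((hg x).trans ((congrArg (·, 0) hxy).trans (hg y).symm))
  have hsurj : Surjective gLin := fun y ↦ by
    obtain ⟨⟨u, v⟩, huv⟩ := G.surjective (y, 0)
    obtain rfl : v = 0 := (hsnd (u, v)).1 (by rw [huv])
    exact ⟨u, congrArg Prod.fst ((hg u).symm.trans huv)⟩
  have hmul (x y : K) : gLin (x * y) = gLin x * gLin y := by
    simpa [cayMul, hg] using hG (x, 0) (y, 0)
  have hone : gLin 1 = 1 := by
    obtain ⟨e, he⟩ := hsurj 1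
    simpa [he] using (hmul 1 e).symm
  exact ⟨.ofBijective (.ofLinearMap gLin hone hmul) ⟨hinj, hsurj⟩, hg⟩

theorem apply_zero_mk_σ₃ (hG : Semiconj₂ G (cayMul c σ₁ σ₂ σ₃ σ₄) (cayMul c σ₁ σ₂ σ₃ σ₄))
    (hg : ∀ u, G (u, 0) = (g u, 0)) (w : K) :
    G (0, σ₃ w) = (g w * (G (0, 1)).1, σ₃ (g w) * (G (0, 1)).2) := by
  simpa [cayMul, hg] using hG (w, 0) (0, 1)

theorem apply_zero_mk_σ₄ (hG : Semiconj₂ G (cayMul c σ₁ σ₂ σ₃ σ₄) (cayMul c σ₁ σ₂ σ₃ σ₄))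
    (hg : ∀ u, G (u, 0) = (g u, 0)) (w : K) :
    G (0, σ₄ w) = ((G (0, 1)).1 * g w, (G (0, 1)).2 * σ₄ (g w)) := by
  simpa [cayMul, hg] using hG (0, 1) (w, 0)

theorem fst_cayMul_apply_zero_mk (hG : Semiconj₂ G (cayMul c σ₁ σ₂ σ₃ σ₄) (cayMul c σ₁ σ₂ σ₃ σ₄))
    (hg : ∀ u, G (u, 0) = (g u, 0)) (v y : K) :
    g c * g (σ₁ v) * g (σ₂ y) =
      (G (0, v)).1 * (G (0, y)).1 + c * σ₁ (G (0, v)).2 * σ₂ (G (0, y)).2 := by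
  simpa [cayMul, hg] using congrArg Prod.fst (hG (0, v) (0, y))

theorem exists_algEquiv_apply_zero_mk
    (hG : Semiconj₂ G (cayMul c σ₁ σ₂ σ₃ σ₄) (cayMul c σ₁ σ₂ σ₃ σ₄))
    (hg : ∀ u, G (u, 0) = (g u, 0)) (ha : (G (0, 1)).1 = 0) :
    ∃ h : K ≃ₐ[F] K, ∀ v, G (0, v) = (0, h v * (G (0, 1)).2) :=
  ⟨(σ₃.symm.trans g).trans σ₃, fun v ↦ by
    simpa [ha] using apply_zero_mk_σ₃ hG hg (σ₃.symm v)⟩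

variable [IsDomain K]

theorem intertwining_of_semiconj₂_cayMul
    (hG : Semiconj₂ G (cayMul c σ₁ σ₂ σ₃ σ₄) (cayMul c σ₁ σ₂ σ₃ σ₄)) (hc : c ≠ 0) (hb : b ≠ 0)
    (hg : ∀ u, G (u, 0) = (g u, 0)) (hh : ∀ v, G (0, v) = (0, h v * b)) :
    (∀ x, g (σ₁ x) = σ₁ (h x)) ∧ (∀ x, g (σ₂ x) = σ₂ (h x)) ∧
      (∀ x, h (σ₃ x) = σ₃ (g x)) ∧ (∀ x, h (σ₄ x) = σ₄ (g x)) ∧ g c = c * σ₁ b * σ₂ b := by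
  have hgc : g c = c * σ₁ b * σ₂ b := by simpa [hh] using fst_cayMul_apply_zero_mk hG hg 1 1
  have hgc₀ : g c ≠ 0 := by simpa using hc
  refine ⟨fun x ↦ mul_left_cancel₀ hgc₀ ?_, fun x ↦ mul_left_cancel₀ hgc₀ ?_,
    fun x ↦ mul_right_cancel₀ hb ?_, fun x ↦ mul_right_cancel₀ hb ?_, hgc⟩
  · have hx1 : g c * g (σ₁ x) = c * (σ₁ (h x) * σ₁ b) * σ₂ b := by
      simpa [hh] using fst_cayMul_apply_zero_mk hG hg x 1
    rw [hx1, hgc]; ring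
  · have h1x : g c * g (σ₂ x) = c * σ₁ b * (σ₂ (h x) * σ₂ b) := by
      simpa [hh] using fst_cayMul_apply_zero_mk hG hg 1 x
    rw [h1x, hgc]; ring
  · simpa [hh] using apply_zero_mk_σ₃ hG hg x
  · simpa [hh, mul_comm b] using apply_zero_mk_σ₄ hG hg x

theorem σ₄_eq_σ₃_of_fst_ne_zero
    (hG : Semiconj₂ G (cayMul c σ₁ σ₂ σ₃ σ₄) (cayMul c σ₁ σ₂ σ₃ σ₄))
    (hg : ∀ u, G (u, 0) = (g u, 0)) (ha : (G (0, 1)).1 ≠ 0) : σ₄ = σ₃ := by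
  ext w
  have hfst (v : K) : (G (0, v)).1 = g (σ₃.symm v) * (G (0, 1)).1 := by
    simpa using congrArg Prod.fst (apply_zero_mk_σ₃ hG hg (σ₃.symm v))
  have hfst_σ₄ : g (σ₃.symm (σ₄ w)) = g w := mul_right_cancel₀ ha <| by
    rw [← hfst, apply_zero_mk_σ₄ hG hg, mul_comm]
  exact σ₃.symm_apply_eq.1 (g.injective hfst_σ₄)

theorem eq_symm_of_weighted_mean {σ τ g : K ≃ₐ[F] K} {α β : K}
    (hα : α ≠ 0) (hβ : β ≠ 0) (hαβ : α + β ≠ 0)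
    (hmean : ∀ w, (α + β) * g (τ (σ w)) = α * g w + β * τ (σ (g w))) : τ = σ.symm := by
  have hτσ (w : K) : τ (σ w) = w := by
    have hmean_sq := hmean (w ^ 2)
    simp only [map_pow] at hmean_sq
    exact g.injective (eq_of_weighted_mean_sq_eq hα hβ hαβ (hmean w) hmean_sq)
  ext v
  simpa using hτσ (σ.symm v)

theorem σ₁_eq_symm_and_σ₂_eq_symm_of_fst_ne_zero
    (hG : Semiconj₂ G (cayMul c σ₁ σ₂ σ₃ σ₄) (cayMul c σ₁ σ₂ σ₃ σ₄)) (hc : c ≠ 0)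
    (hg : ∀ u, G (u, 0) = (g u, 0)) (ha : (G (0, 1)).1 ≠ 0) (hb : (G (0, 1)).2 ≠ 0) :
    σ₁ = σ₃.symm ∧ σ₂ = σ₃.symm := by
  set α := (G (0, 1)).1 ^ 2 with hα
  set β := c * σ₁ (G (0, 1)).2 * σ₂ (G (0, 1)).2 with hβ
  have hα₀ : α ≠ 0 := pow_ne_zero 2 ha
  have hβ₀ : β ≠ 0 := by simp [hβ, hc, hb]
  have hgc : g c = α + β := by
    simpa [hα, hβ, sq] using fst_cayMul_apply_zero_mk hG hg 1 1
  have hαβ₀ : α + β ≠ 0 := by simpa [← hgc] using hc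
  constructor
  · refine eq_symm_of_weighted_mean (g := g) hα₀ hβ₀ hαβ₀ fun w ↦ ?_
    have hprod := fst_cayMul_apply_zero_mk hG hg (σ₃ w) 1
    simp only [apply_zero_mk_σ₃ hG hg w, map_one, map_mul, mul_one] at hprod
    linear_combination hprod - g (σ₁ (σ₃ w)) * hgc
  · refine eq_symm_of_weighted_mean (g := g) hα₀ hβ₀ hαβ₀ fun w ↦ ?_
    have hprod := fst_cayMul_apply_zero_mk hG hg 1 (σ₃ w)
    simp only [apply_zero_mk_σ₃ hG hg w, map_one, map_mul, mul_one] at hprod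
    linear_combination hprod - g (σ₂ (σ₃ w)) * hgc

theorem fst_apply_zero_one_eq_zero
    (hG : Semiconj₂ G (cayMul c σ₁ σ₂ σ₃ σ₄) (cayMul c σ₁ σ₂ σ₃ σ₄)) (hc : c ≠ 0)
    (hnuc : IsOneSidedNucleus (cayMul c σ₁ σ₂ σ₃ σ₄) {z : K × K | z.2 = 0})
    (hg : ∀ u, G (u, 0) = (g u, 0)) (hb : (G (0, 1)).2 ≠ 0) : (G (0, 1)).1 = 0 := by
  by_contra ha
  obtain rfl := σ₄_eq_σ₃_of_fst_ne_zero hG hg ha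
  obtain ⟨rfl, rfl⟩ := σ₁_eq_symm_and_σ₂_eq_symm_of_fst_ne_zero hG hc hg ha hb
  have huniv := hnuc.eq_univ (cayMul_symm_assoc σ₄ c)
  have hmem : ((0, 1) : K × K) ∈ {z : K × K | z.2 = 0} := huniv ▸ Set.mem_univ _
  exact one_ne_zero hmem

end Cay

theorem cay_field_automorphism_characterization_general
    {F K : Type*} [CommSemiring F] [CommRing K] [IsDomain K] [Algebra F K]
    (σ₁ σ₂ σ₃ σ₄ : K ≃ₐ[F] K) (c : K) (hc : c ≠ 0)
    (hnuc : IsOneSidedNucleus (cayMul c σ₁ σ₂ σ₃ σ₄) {z : K × K | z.2 = 0})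
    (G : (K × K) ≃ₗ[F] K × K) :
    Semiconj₂ G (cayMul c σ₁ σ₂ σ₃ σ₄) (cayMul c σ₁ σ₂ σ₃ σ₄) ↔
      ∃ (g h : K ≃ₐ[F] K) (b : K), b ≠ 0 ∧
        (∀ u v : K, G (u, v) = (g u, h v * b)) ∧
        (∀ x : K, g (σ₁ x) = σ₁ (h x)) ∧
        (∀ x : K, g (σ₂ x) = σ₂ (h x)) ∧
        (∀ x : K, h (σ₃ x) = σ₃ (g x)) ∧
        (∀ x : K, h (σ₄ x) = σ₄ (g x)) ∧
        g c = c * σ₁ b * σ₂ b := by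
  constructor
  · intro hG
    have hsnd (p : K × K) : (G p).2 = 0 ↔ p.2 = 0 := hnuc.apply_mem_iff G.bijective hG
    have hb : (G (0, 1)).2 ≠ 0 := fun hb ↦ one_ne_zero ((hsnd (0, 1)).1 hb)
    obtain ⟨g, hg⟩ := exists_algEquiv_apply_mk_zero hG hsnd
    have ha : (G (0, 1)).1 = 0 := fst_apply_zero_one_eq_zero hG hc hnuc hg hb
    obtain ⟨h, hh⟩ := exists_algEquiv_apply_zero_mk hG hg ha
    refine ⟨g, h, (G (0, 1)).2, hb, fun u v ↦ ?_, intertwining_of_semiconj₂_cayMul hG hc hb hg hh⟩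
    rw [← Prod.fst_add_snd (u, v), map_add, hg, hh v, Prod.mk_add_mk, add_zero, zero_add]
  · rintro ⟨g, h, b, -, hGgh, h₁, h₂, h₃, h₄, hgc⟩
    exact semiconj₂_cayMul_of_intertwining hGgh h₁ h₂ h₃ h₄ hgc

/-- If `char F ≠ 2` and one of the left, middle or right nuclei of
`A = Cay(K,c,σ₁,σ₂,σ₃,σ₄)` equals `K × {0}`, then an `F`-linear bijection
`G : K × K → K × K` is an algebra automorphism of `A` iff it has the form
`G(u,v) = (g(u), h(v)·b)` with `g, h ∈ Aut_F(K)`, `g∘σᵢ = σᵢ∘h` (i = 1,2),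
`h∘σᵢ = σᵢ∘g` (i = 3,4), `b ≠ 0`, and `g(c) = c·σ₁(b)·σ₂(b)`. -/
theorem cay_field_automorphism_characterization
    {F K : Type*} [Field F] [Field K] [Algebra F K] [FiniteDimensional F K]
    (hF : (2 : F) ≠ 0)
    (σ₁ σ₂ σ₃ σ₄ : K ≃ₐ[F] K) (c : K) (hc : c ≠ 0)
    (hnuc :
      ({z : K × K | ∀ a b : K × K,
          cayMul c σ₁ σ₂ σ₃ σ₄ (cayMul c σ₁ σ₂ σ₃ σ₄ z a) b
            = cayMul c σ₁ σ₂ σ₃ σ₄ z (cayMul c σ₁ σ₂ σ₃ σ₄ a b)}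
        = {z : K × K | z.2 = 0}) ∨
      ({z : K × K | ∀ a b : K × K,
          cayMul c σ₁ σ₂ σ₃ σ₄ (cayMul c σ₁ σ₂ σ₃ σ₄ a z) b
            = cayMul c σ₁ σ₂ σ₃ σ₄ a (cayMul c σ₁ σ₂ σ₃ σ₄ z b)}
        = {z : K × K | z.2 = 0}) ∨
      ({z : K × K | ∀ a b : K × K,
          cayMul c σ₁ σ₂ σ₃ σ₄ (cayMul c σ₁ σ₂ σ₃ σ₄ a b) z
            = cayMul c σ₁ σ₂ σ₃ σ₄ a (cayMul c σ₁ σ₂ σ₃ σ₄ b z)}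
        = {z : K × K | z.2 = 0}))
    (G : K × K → K × K)
    (hGbij : Function.Bijective G)
    (hGadd : ∀ p q : K × K, G (p + q) = G p + G q)
    (hGsmul : ∀ (α : F) (p : K × K), G (α • p) = α • G p) :
    (∀ p q : K × K,
        G (cayMul c σ₁ σ₂ σ₃ σ₄ p q) = cayMul c σ₁ σ₂ σ₃ σ₄ (G p) (G q)) ↔
      ∃ (g h : K ≃ₐ[F] K) (b : K), b ≠ 0 ∧
        (∀ u v : K, G (u, v) = (g u, h v * b)) ∧
        (∀ x : K, g (σ₁ x) = σ₁ (h x)) ∧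
        (∀ x : K, g (σ₂ x) = σ₂ (h x)) ∧
        (∀ x : K, h (σ₃ x) = σ₃ (g x)) ∧
        (∀ x : K, h (σ₄ x) = σ₄ (g x)) ∧
        g c = c * σ₁ b * σ₂ b :=
  cay_field_automorphism_characterization_general σ₁ σ₂ σ₃ σ₄ c hc hnuc
    (.ofBijective ⟨⟨G, hGadd⟩, hGsmul⟩ hGbij)
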